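/- arXiv:1410.5559 — 2 statements merged into one kernel-verified Lean document; each statement's English description precedes it below -/
import Mathlib

section
/- Let $n \geq 1$, let $\alpha > 2$ be a real number, and let $U \in \mathbb{R}^{n \times n}$ be a symmetric matrix satisfying $U \succ \alpha\sqrt{\alpha - 1}\, I$. Then $\frac{1}{\sqrt{\alpha - 1}}\, U - \frac{1}{\alpha^2}\, U^2 \prec I$. -/
open Matrix

/-
Put `s = √(α - 1)`. Since `α² - 4 (α - 1) = (α - 2)²`, the quadratic `1 - (x / s - x² / α²)` has the
roots `α s` and `α / s`, and `α / s ≤ α s` when `2 ≤ α`, so it is positive for every `x > α s`. The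
hypothesis places the spectrum of `U` in this half-line, and a real polynomial in a self-adjoint
element is strictly positive as soon as it is positive on the spectrum.
-/

theorem one_sub_combination_eq_mul {K : Type*} [Field K] {α s : K} (hα : α ≠ 0) (hs : s ≠ 0)
    (h : s ^ 2 = α - 1) (x : K) :
    1 - (s⁻¹ * x - (α ^ 2)⁻¹ * x ^ 2) = (α ^ 2)⁻¹ * ((x - α * s) * (x - α * s⁻¹)) := by
  field_simp
  linear_combination (α * x) * h

theorem combination_lt_one_of_mul_sqrt_lt {α x : ℝ} (hα : 2 ≤ α) (hx : α * √(α - 1) < x) :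
    (√(α - 1))⁻¹ * x - (α ^ 2)⁻¹ * x ^ 2 < 1 := by
  have one_le_sqrt : 1 ≤ √(α - 1) := Real.one_le_sqrt.mpr (by linarith)
  have roots_le : α * (√(α - 1))⁻¹ ≤ α * √(α - 1) := by
    gcongr
    exact (inv_le_one_of_one_le₀ one_le_sqrt).trans one_le_sqrt
  rw [← sub_pos, one_sub_combination_eq_mul (by positivity) (by positivity)
    (Real.sq_sqrt (by linarith))]
  exact mul_pos (by positivity)
    (mul_pos (sub_pos.mpr hx) (sub_pos.mpr (roots_le.trans_lt hx)))

section SpectralPositivity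

variable {A : Type*} [Ring A] [StarRing A] [PartialOrder A] [StarOrderedRing A]
  [TopologicalSpace A] [Algebra ℝ A] [ContinuousFunctionalCalculus ℝ A IsSelfAdjoint]
  [NonnegSpectrumClass ℝ A]

theorem isStrictlyPositive_aeval_iff (p : Polynomial ℝ) {a : A} (ha : IsSelfAdjoint a) :
    IsStrictlyPositive (Polynomial.aeval a p) ↔ ∀ x ∈ spectrum ℝ a, 0 < p.eval x := by
  rw [← cfc_polynomial p a, cfc_isStrictlyPositive_iff p.eval a]

theorem isStrictlyPositive_sub_algebraMap_iff {a : A} {c : ℝ} :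
    IsStrictlyPositive (a - algebraMap ℝ A c) ↔
      IsSelfAdjoint a ∧ ∀ x ∈ spectrum ℝ a, c < x := by
  have iff_of_isSelfAdjoint (ha : IsSelfAdjoint a) :
      IsStrictlyPositive (a - algebraMap ℝ A c) ↔ ∀ x ∈ spectrum ℝ a, c < x := by
    simpa using isStrictlyPositive_aeval_iff (.X - .C c) ha
  refine ⟨fun h ↦ ?_, fun ⟨ha, h⟩ ↦ (iff_of_isSelfAdjoint ha).mpr h⟩
  have ha : IsSelfAdjoint a := by
    simpa using h.isSelfAdjoint.add (cfc_predicate_algebraMap c)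
  exact ⟨ha, (iff_of_isSelfAdjoint ha).mp h⟩

theorem combination_lt_one_of_posDef_general {α : ℝ} (hα : 2 ≤ α) {u : A}
    (h : IsStrictlyPositive (u - (α * √(α - 1)) • (1 : A))) :
    IsStrictlyPositive (1 - ((√(α - 1))⁻¹ • u - (α ^ 2)⁻¹ • (u * u))) := by
  rw [← Algebra.algebraMap_eq_smul_one] at h
  obtain ⟨hu, spectrum_gt⟩ := isStrictlyPositive_sub_algebraMap_iff.mp h
  let p : Polynomial ℝ := 1 - ((√(α - 1))⁻¹ • .X - (α ^ 2)⁻¹ • .X ^ 2)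
  have aeval_p : Polynomial.aeval u p = 1 - ((√(α - 1))⁻¹ • u - (α ^ 2)⁻¹ • (u * u)) := by
    simp [p, sq]
  rw [← aeval_p, isStrictlyPositive_aeval_iff p hu]
  intro x hx
  simpa [p] using combination_lt_one_of_mul_sqrt_lt hα (spectrum_gt x hx)

end SpectralPositivity

/-- If `U` is symmetric and `U ≻ α√(α-1) I` for some `α > 2`, then
`(α-1)^{-1/2} U - α^{-2} U² ≺ I`. -/
theorem combination_lt_one_of_posDef {n : ℕ} (hn : 1 ≤ n) (α : ℝ) (hα : 2 < α)
    (U : Matrix (Fin n) (Fin n) ℝ) (hU : U.IsSymm)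
    (h : (U - (α * Real.sqrt (α - 1)) • (1 : Matrix (Fin n) (Fin n) ℝ)).PosDef) :
    ((1 : Matrix (Fin n) (Fin n) ℝ) -
      ((Real.sqrt (α - 1))⁻¹ • U - (α ^ 2)⁻¹ • (U * U))).PosDef := by
  open scoped MatrixOrder in
  exact isStrictlyPositive_iff_posDef.mp
    (combination_lt_one_of_posDef_general hα.le (isStrictlyPositive_iff_posDef.mpr h))
end

section
/- Let $m \geq n \geq 1$ and let $D, T \in \mathbb{R}^{m \times n}$ with $D^T D$ positive definite and $T^T T$ positive definite. Then the function $f(X) = \operatorname{tr}\big((DX - T)^T (D - T X^{-1})\big)$ is strictly convex on the open convex cone of $n \times n$ symmetric positive definite matrices; that is, for all symmetric positive definite $X_1 \neq X_2$ and all $0 < t < 1$, $f(t X_1 + (1 - t) X_2) < t f(X_1) + (1 - t) f(X_2)$. -/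
open Matrix

/-!
For Hermitian `X` the error is an affine function of `X` plus `tr (P X⁻¹)`, where `P = Tᴴ T`.
Completing the square, every Hermitian `Y` satisfies
`tr (P A⁻¹) - (2 tr (P Y) - tr (P Y A Y)) = tr (P (A⁻¹ - Y) A (A⁻¹ - Y)) ≥ 0`,
with equality only for `Y = A⁻¹`. The subtracted term is affine in `A`, so taking `Y = X⁻¹` gives an
affine minorant of `A ↦ tr (P A⁻¹)` that touches it at `X` only, and this forces strict convexity.
-/

theorem strictConvexOn_of_forall_exists_convexOn_lt {𝕜 E β : Type*} [Ring 𝕜] [LinearOrder 𝕜]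
    [IsStrictOrderedRing 𝕜] [DenselyOrdered 𝕜] [AddCommGroup E] [Module 𝕜 E]
    [Module.IsTorsionFree 𝕜 E] [AddCommMonoid β] [PartialOrder β] [IsOrderedCancelAddMonoid β]
    [SMul 𝕜 β] [PosSMulStrictMono 𝕜 β] {s : Set E} {f : E → β} (hs : Convex 𝕜 s)
    (h : ∀ x ∈ s, ∃ g : E → β, ConvexOn 𝕜 s g ∧ g x = f x ∧ ∀ y ∈ s, y ≠ x → g y < f y) :
    StrictConvexOn 𝕜 s f := by
  refine ⟨hs, fun x hx y hy hxy a b ha hb hab ↦ ?_⟩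
  have hz : a • x + b • y ∈ openSegment 𝕜 x y := ⟨a, b, ha, hb, hab, rfl⟩
  have hxz : x ≠ a • x + b • y := fun h ↦ hxy (left_mem_openSegment_iff.1 (by rwa [← h] at hz))
  have hyz : y ≠ a • x + b • y := fun h ↦ hxy (right_mem_openSegment_iff.1 (by rwa [← h] at hz))
  obtain ⟨g, hg, hgz, hlt⟩ := h (a • x + b • y) (hs hx hy ha.le hb.le hab)
  calc f (a • x + b • y) = g (a • x + b • y) := hgz.symm
    _ ≤ a • g x + b • g y := hg.2 hx hy ha.le hb.le hab
    _ < a • f x + b • f y := add_lt_add (smul_lt_smul_of_pos_left (hlt x hx hxz) ha)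
      (smul_lt_smul_of_pos_left (hlt y hy hyz) hb)

theorem convex_setOf_posDef {n α R : Type*} [CommSemiring α] [PartialOrder α] [StarRing α]
    [StarOrderedRing α] [Ring R] [PartialOrder R] [StarRing R] [AddLeftMono R] [Algebra α R]
    [StarModule α R] [PosSMulStrictMono α R] : Convex α {X : Matrix n n R | X.PosDef} :=
  convex_iff_forall_pos.2 fun _ hX _ hY _ _ ha hb _ ↦ (hX.smul ha).add (hY.smul hb)

section CommRing

variable {m n R : Type*} [Fintype m] [Fintype n] [DecidableEq n] [CommRing R]

theorem inv_sub_mul_mul_inv_sub {A : Matrix n n R} (hA : IsUnit A.det) (Y : Matrix n n R) :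
    (A⁻¹ - Y) * A * (A⁻¹ - Y) = A⁻¹ - (2 • Y - Y * A * Y) := by
  rw [sub_mul, nonsing_inv_mul _ hA, sub_mul, one_mul, mul_sub, mul_nonsing_inv_cancel_right _ _ hA]
  abel

theorem trace_conjTranspose_sub_mul_sub_mul_inv [StarRing R] (D T : Matrix m n R)
    {X : Matrix n n R} (hX : X.IsHermitian) (hdet : IsUnit X.det) :
    ((D * X - T)ᴴ * (D - T * X⁻¹)).trace =
      (Tᴴ * T * X⁻¹).trace + (Dᴴ * D * X).trace - ((Dᴴ * T).trace + (Tᴴ * D).trace) := by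
  have hDD : (X * Dᴴ * D).trace = (Dᴴ * D * X).trace := by
    rw [Matrix.mul_assoc, trace_mul_comm]
  have hDT : (X * Dᴴ * (T * X⁻¹)).trace = (Dᴴ * T).trace := by
    rw [Matrix.mul_assoc, trace_mul_comm, ← Matrix.mul_assoc, nonsing_inv_mul_cancel_right _ _ hdet]
  rw [conjTranspose_sub, conjTranspose_mul, hX.eq, Matrix.sub_mul, Matrix.mul_sub, Matrix.mul_sub,
    trace_sub, trace_sub, trace_sub, hDD, hDT, ← Matrix.mul_assoc Tᴴ]
  ring

end CommRing

section RCLike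

open scoped ComplexOrder

variable {m n 𝕜 : Type*} [Fintype m] [Fintype n] [RCLike 𝕜]

theorem convexOn_re_trace_mul (C : Matrix m n 𝕜) {s : Set (Matrix n m 𝕜)} (hs : Convex ℝ s) :
    ConvexOn ℝ s fun X ↦ RCLike.re (C * X).trace :=
  (RCLike.reLm ∘ₗ traceLinearMap m ℝ 𝕜 ∘ₗ mulLeftLinearMap m ℝ C).convexOn hs

open scoped MatrixOrder in
theorem trace_mul_conjTranspose_mul_mul_pos {P : Matrix n n 𝕜} {A : Matrix m m 𝕜} (hP : P.PosDef)
    (hA : A.PosDef) {E : Matrix m n 𝕜} (hE : E ≠ 0) : 0 < (P * (Eᴴ * A * E)).trace := by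
  classical
  obtain ⟨C, hC, rfl⟩ :=
    CStarAlgebra.isStrictlyPositive_iff_eq_star_mul_self.1 hP.isStrictlyPositive
  obtain ⟨B, hB, rfl⟩ :=
    CStarAlgebra.isStrictlyPositive_iff_eq_star_mul_self.1 hA.isStrictlyPositive
  rw [isUnit_iff_isUnit_det] at hB hC
  have hgram : (star C * C * (Eᴴ * (star B * B) * E)).trace =
      ((B * E * Cᴴ)ᴴ * (B * E * Cᴴ)).trace := by
    simp only [star_eq_conjTranspose, conjTranspose_mul, conjTranspose_conjTranspose]
    rw [Matrix.mul_assoc, trace_mul_comm]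
    simp only [Matrix.mul_assoc]
  have hBEC : B * E * Cᴴ ≠ 0 := fun h ↦ hE <| by
    rw [← nonsing_inv_mul_cancel_left B E hB,
      ← mul_nonsing_inv_cancel_right Cᴴ (B * E) (by simpa using hC.star), h]
    simp
  rw [hgram]
  exact (posSemidef_conjTranspose_mul_self _).trace_nonneg.lt_of_ne'
    (trace_conjTranspose_mul_self_eq_zero_iff.not.2 hBEC)

variable [DecidableEq n] {P : Matrix n n 𝕜}

theorem re_trace_affine_lt_re_trace_mul_inv (hP : P.PosDef) {A Y : Matrix n n 𝕜} (hA : A.PosDef)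
    (hY : Y.IsHermitian) (hne : Y ≠ A⁻¹) :
    RCLike.re (-(Y * P * Y) * A).trace + 2 * RCLike.re (P * Y).trace <
      RCLike.re (P * A⁻¹).trace := by
  have hpos : 0 < (P * ((A⁻¹ - Y)ᴴ * A * (A⁻¹ - Y))).trace :=
    trace_mul_conjTranspose_mul_mul_pos hP hA (sub_ne_zero.2 hne.symm)
  have hcycle : (P * (Y * A * Y)).trace = (Y * P * Y * A).trace := by
    rw [← mul_assoc, trace_mul_comm]
    simp only [mul_assoc]
  rw [(hA.inv.isHermitian.sub hY).eq,
    inv_sub_mul_mul_inv_sub ((isUnit_iff_isUnit_det A).1 hA.isUnit), mul_sub, mul_sub,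
    mul_smul_comm, trace_sub, trace_sub, trace_smul, hcycle] at hpos
  have hre := (RCLike.pos_iff.1 hpos).1
  simp only [two_nsmul, map_sub, map_add] at hre
  simp only [neg_mul, trace_neg, map_neg]
  linarith

theorem strictConvexOn_re_trace_mul_inv (hP : P.PosDef) :
    StrictConvexOn ℝ {X : Matrix n n 𝕜 | X.PosDef} fun X ↦ RCLike.re (P * X⁻¹).trace := by
  refine strictConvexOn_of_forall_exists_convexOn_lt convex_setOf_posDef
    fun X (hX : X.PosDef) ↦ ?_
  have hdet : IsUnit X.det := (isUnit_iff_isUnit_det X).1 hX.isUnit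
  refine ⟨fun A ↦ RCLike.re (-(X⁻¹ * P * X⁻¹) * A).trace + 2 * RCLike.re (P * X⁻¹).trace,
    (convexOn_re_trace_mul _ convex_setOf_posDef).add_const _, ?_, fun A hA hne ↦ ?_⟩
  · have htouch : (X⁻¹ * P * X⁻¹ * X).trace = (P * X⁻¹).trace := by
      rw [nonsing_inv_mul_cancel_right _ _ hdet, trace_mul_comm]
    simp only [neg_mul, trace_neg, map_neg, htouch]
    ring
  · exact re_trace_affine_lt_re_trace_mul_inv hP hA hX.inv.isHermitian
      fun h ↦ hne (inv_inj h hdet).symm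

theorem strictConvexOn_pdtls_error_general (D T : Matrix m n 𝕜) (hT : (Tᴴ * T).PosDef) :
    StrictConvexOn ℝ {X : Matrix n n 𝕜 | X.PosDef}
      fun X ↦ RCLike.re ((D * X - T)ᴴ * (D - T * X⁻¹)).trace := by
  refine (((strictConvexOn_re_trace_mul_inv hT).add_convexOn
    (convexOn_re_trace_mul (Dᴴ * D) convex_setOf_posDef)).add_const
    (-RCLike.re ((Dᴴ * T).trace + (Tᴴ * D).trace))).congr fun X (hX : X.PosDef) ↦ ?_
  have hdet : IsUnit X.det := (isUnit_iff_isUnit_det X).1 hX.isUnit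
  simp only [trace_conjTranspose_sub_mul_sub_mul_inv D T hX.isHermitian hdet, map_sub, map_add,
    Pi.add_apply]
  ring

end RCLike

/-- The error function `f(X) = tr((DX - T)ᵀ (D - T X⁻¹))` of the positive definite total least
squares problem is strictly convex on the cone of symmetric positive definite matrices. -/
theorem strictConvexOn_pdtls_error {m n : ℕ} (hn : 1 ≤ n) (hmn : n ≤ m)
    (D T : Matrix (Fin m) (Fin n) ℝ)
    (hD : (Dᵀ * D).PosDef) (hT : (Tᵀ * T).PosDef) :
    ∀ X₁ X₂ : Matrix (Fin n) (Fin n) ℝ, X₁.PosDef → X₂.PosDef → X₁ ≠ X₂ →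
      ∀ t : ℝ, 0 < t → t < 1 →
        ((D * (t • X₁ + (1 - t) • X₂) - T)ᵀ *
            (D - T * (t • X₁ + (1 - t) • X₂)⁻¹)).trace <
          t * ((D * X₁ - T)ᵀ * (D - T * X₁⁻¹)).trace +
            (1 - t) * ((D * X₂ - T)ᵀ * (D - T * X₂⁻¹)).trace :=
  fun _ _ h₁ h₂ hne t ht₀ ht₁ ↦
    (strictConvexOn_pdtls_error_general D T hT).2 h₁ h₂ hne ht₀ (sub_pos.2 ht₁)
      (add_sub_cancel t 1)
end
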